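/- Let q ≥ 2 and λ ≥ 1 be natural numbers and let β and e be integers. Let G be the group presented with generators s₁, …, s_{2q}, f and defining relators s₁² f, …, s_{2q−1}² f, s_{2q}^{2λ+1} f^β, and s₁ s₂ ⋯ s_{2q} f^e. Then G admits a presentation with 2q−2 generators and 2q−2 defining relators; that is, there exists a set R of at most 2q−2 elements of the free group on 2q−2 generators such that the presented group on these generators with relator set R is isomorphic to G. -/

import Mathlib

/-- The generator `s_{i+1}` (for `i < 2q`) of the Boileau--Zieschang group, as an
element of the free group on `2q+1` generators; the last generator plays the role
of `f`. -/
def BZgen (q : ℕ) (i : Fin (2 * q)) : FreeGroup (Fin (2 * q + 1)) :=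
  FreeGroup.of i.castSucc

/-- The generator `f` of the Boileau--Zieschang group. -/
def BZf (q : ℕ) : FreeGroup (Fin (2 * q + 1)) :=
  FreeGroup.of (Fin.last (2 * q))

/-- The relators `s₁² f, …, s_{2q−1}² f, s_{2q}^{2λ+1} f^β, s₁ s₂ ⋯ s_{2q} f^e`
of the Boileau--Zieschang group. -/
def BZrels (q : ℕ) (hq : 1 ≤ q) (lam : ℕ) (β e : ℤ) : Set (FreeGroup (Fin (2 * q + 1))) :=
  {w | (∃ i : Fin (2 * q - 1),
          w = BZgen q ⟨(i : ℕ), by have := i.isLt; omega⟩ ^ 2 * BZf q) ∨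
    w = BZgen q ⟨2 * q - 1, by omega⟩ ^ (2 * lam + 1) * BZf q ^ β ∨
    w = (List.ofFn (BZgen q)).prod * BZf q ^ e}

/-!
Put `x = s_{2q-1}`, so that `f = x⁻²` and `sᵢ² = x²` for all `i < 2q`. Then `x²` commutes with every
`sᵢ`, and conjugation by `x` inverts `cᵢ = sᵢ x⁻¹`. Moving all powers of `x` to the right, the
product relation becomes `s_{2q}⁻¹ = w xᵏ` with `w = c₁ c₂⁻¹ c₃ ⋯`, where `k` is odd because `2q` is
even. Since `xᵏ` inverts the `cᵢ` as well, `s_{2q}^{-(2λ+1)} = (w v)^λ w x^{k(2λ+1)}` with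
`v = c₁⁻¹ c₂ c₃⁻¹ ⋯`. The relation `s_{2q}^{2λ+1} f^β = 1` therefore says that `(w v)^λ w` is a
certain odd power of `x`. Multiplying `c₁` by a suitable even power of `x` turns this into
`x = (w v)^λ w`, which eliminates `x` as well as `f` and `s_{2q}`. What remains are `2q - 2`
generators and the `2q - 2` relations `sᵢ² = x²`.
-/

namespace BoileauZieschang

section Substitution

universe u v

variable {α : Type u} {β : Type v} {R : Set (FreeGroup α)} {S : Set (FreeGroup β)}

theorem map_freeGroupLift {G H : Type*} [Group G] [Group H] (φ : G →* H) (a : α → G)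
    (w : FreeGroup α) : φ (FreeGroup.lift a w) = FreeGroup.lift (fun i ↦ φ (a i)) w :=
  FreeGroup.lift_unique (φ.comp (FreeGroup.lift a)) fun _ ↦ by simp

/-- The tuple `a` satisfies every relator in `R`, i.e. it is the tuple of images of the generators
under some homomorphism `PresentedGroup R →* H`. -/
abbrev IsSolution {H : Type*} [Group H] (R : Set (FreeGroup α)) (a : α → H) : Prop :=
  ∀ r ∈ R, FreeGroup.lift a r = 1

theorem isSolution_of : IsSolution R (PresentedGroup.of : α → PresentedGroup R) := fun r hr ↦ by
  have lift_of : FreeGroup.lift PresentedGroup.of = PresentedGroup.mk R := by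
    ext
    simp [PresentedGroup.of]
  rw [lift_of, PresentedGroup.one_of_mem hr]

/-- A Tietze equivalence: two presentations define isomorphic groups as soon as substitution into
the words `U` and `V` gives mutually inverse bijections between their solutions in any group. -/
def equivOfSubstitution (U : α → FreeGroup β) (V : β → FreeGroup α)
    (hU : ∀ {H : Type v} [Group H] (b : β → H), IsSolution S b →
      IsSolution R (fun i ↦ FreeGroup.lift b (U i)) ∧
        ∀ j, FreeGroup.lift (fun i ↦ FreeGroup.lift b (U i)) (V j) = b j)
    (hV : ∀ {H : Type u} [Group H] (a : α → H), IsSolution R a →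
      IsSolution S (fun j ↦ FreeGroup.lift a (V j)) ∧
        ∀ i, FreeGroup.lift (fun j ↦ FreeGroup.lift a (V j)) (U i) = a i) :
    PresentedGroup R ≃* PresentedGroup S :=
  MonoidHom.toMulEquiv
    (PresentedGroup.toGroup (hU _ isSolution_of).1) (PresentedGroup.toGroup (hV _ isSolution_of).1)
    (PresentedGroup.ext fun i ↦ by
      simpa [map_freeGroupLift] using (hV PresentedGroup.of isSolution_of).2 i)
    (PresentedGroup.ext fun j ↦ by
      simpa [map_freeGroupLift] using (hU PresentedGroup.of isSolution_of).2 j)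

end Substitution

section Inverted

variable {G : Type*} [Group G] {c s w v x y : G}

theorem semiconjBy_inv_of_sq_eq_sq (h : s ^ 2 = x ^ 2) :
    SemiconjBy x (s * x⁻¹) (s * x⁻¹)⁻¹ := by
  have hsx : s * x⁻¹ = s⁻¹ * x := by
    rw [mul_inv_eq_iff_eq_mul, mul_assoc, ← sq, ← h, sq, inv_mul_cancel_left]
  rw [SemiconjBy, mul_inv_rev, inv_inv, hsx, mul_assoc]

theorem commute_zpow_of_even (h : SemiconjBy x c c⁻¹) {k : ℤ} (hk : Even k) :
    Commute (x ^ k) c := by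
  obtain ⟨m, rfl⟩ := hk
  have hxx : Commute (x * x) c := by simpa [Commute] using h.inv_right.mul_left h
  rw [← two_mul, zpow_mul, zpow_two]
  exact hxx.zpow_left m

theorem semiconjBy_zpow_of_odd (h : SemiconjBy x c c⁻¹) {k : ℤ} (hk : Odd k) :
    SemiconjBy (x ^ k) c c⁻¹ := by
  obtain ⟨m, rfl⟩ := hk
  rw [zpow_add_one]
  exact (commute_zpow_of_even h (even_two_mul m)).inv_right.semiconjBy.mul_left h

theorem mul_pow_two_mul_add_one (hwv : SemiconjBy y w v) (hvw : SemiconjBy y v w) (l : ℕ) :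
    (w * y) ^ (2 * l + 1) = (w * v) ^ l * w * y ^ (2 * l + 1) := by
  have hsq : (w * y) ^ 2 = w * v * y ^ 2 := by
    simp only [sq, mul_assoc]
    rw [← mul_assoc y w, hwv.eq, mul_assoc]
  have hcomm : Commute (y ^ 2) w := sq y ▸ hvw.mul_left hwv
  have hcomm' : Commute (y ^ 2) v := sq y ▸ hwv.mul_left hvw
  calc (w * y) ^ (2 * l + 1) = (w * v) ^ l * ((y ^ 2) ^ l * w) * y := by
        rw [pow_succ, pow_mul, hsq, (hcomm.mul_right hcomm').symm.mul_pow]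
        simp only [mul_assoc]
    _ = (w * v) ^ l * w * y ^ (2 * l + 1) := by
        rw [(hcomm.pow_left l).eq, pow_succ y (2 * l), pow_mul]
        simp only [mul_assoc]

end Inverted

section AlternatingProd

open List

variable {G : Type*} [Group G] {c x y z : G} {L : List G}

theorem map_alternatingProd {H : Type*} [Group H] (φ : G →* H) :
    ∀ L : List G, φ L.alternatingProd = (L.map φ).alternatingProd
  | [] => by simp
  | [_] => by simp
  | _ :: _ :: L => by simp [alternatingProd, map_alternatingProd φ L]

theorem semiconjBy_alternatingProd {f : G → G} :
    ∀ {L : List G}, (∀ c ∈ L, SemiconjBy x c (f c)) →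
      SemiconjBy x L.alternatingProd (L.map f).alternatingProd
  | [], _ => by simp
  | [c], h => by simpa using h
  | c :: d :: L, h => by
    simp only [mem_cons, forall_eq_or_imp] at h
    exact (h.1.mul_right h.2.1.inv_right).mul_right (semiconjBy_alternatingProd h.2.2)

theorem commute_alternatingProd (h : ∀ c ∈ L, Commute z c) : Commute z L.alternatingProd := by
  simpa [Commute] using semiconjBy_alternatingProd (f := id) h

theorem prod_map_mul_right :
    ∀ {L : List G}, (∀ c ∈ L, SemiconjBy x c c⁻¹) →
      (L.map (· * x)).prod = L.alternatingProd * x ^ L.length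
  | [], _ => by simp
  | [c], _ => by simp
  | c :: d :: L, h => by
    simp only [mem_cons, forall_eq_or_imp] at h
    have hL : Commute (x ^ 2) L.alternatingProd := commute_alternatingProd fun a ha ↦
      mod_cast commute_zpow_of_even (h.2.2 a ha) even_two
    calc ((c :: d :: L).map (· * x)).prod = c * (x * d) * x * (L.map (· * x)).prod := by
          simp [mul_assoc]
      _ = c * d⁻¹ * (x ^ 2 * L.alternatingProd) * x ^ L.length := by
          rw [h.2.1.eq, prod_map_mul_right h.2.2]; simp only [sq, mul_assoc]
      _ = (c :: d :: L).alternatingProd * x ^ (c :: d :: L).length := by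
          rw [hL.eq]; simp [alternatingProd, pow_succ', mul_assoc]

theorem alternatingProd_mul_cons :
    ∀ {L : List G}, (∀ d ∈ L, Commute z d) →
      (c * z :: L).alternatingProd = (c :: L).alternatingProd * z
  | [], _ => by simp
  | d :: L, h => by
    simp only [mem_cons, forall_eq_or_imp] at h
    have hz : Commute z (d⁻¹ * L.alternatingProd) :=
      h.1.inv_right.mul_right (commute_alternatingProd h.2)
    simp only [alternatingProd, mul_assoc]
    rw [hz.eq, mul_assoc]

/-- The word `(w v)ˡ w`, where `w = a₀ a₁⁻¹ a₂ ⋯` and `v = a₀⁻¹ a₁ a₂⁻¹ ⋯`. Modulo the other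
relations it expresses `s_{2q-1}` through the remaining generators `a₀, a₁, …`. -/
def solvingWord (l : ℕ) (L : List G) : G :=
  (L.alternatingProd * (L.map (·⁻¹)).alternatingProd) ^ l * L.alternatingProd

theorem map_solvingWord {H : Type*} [Group H] (φ : G →* H) (l : ℕ) (L : List G) :
    φ (solvingWord l L) = solvingWord l (L.map φ) := by
  simp [solvingWord, map_alternatingProd, Function.comp_def]

theorem solvingWord_mul_cons (l : ℕ) (h : ∀ d ∈ c :: L, Commute z d) :
    solvingWord l (c * z :: L) = solvingWord l (c :: L) * z := by
  obtain ⟨hc, hL⟩ := forall_mem_cons.mp h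
  have hinv : ((c * z)⁻¹ :: L.map (·⁻¹)).alternatingProd =
      (c⁻¹ :: L.map (·⁻¹)).alternatingProd * z⁻¹ := by
    rw [mul_inv_rev, hc.inv_inv.eq]
    exact alternatingProd_mul_cons (forall_mem_map.mpr fun d hd ↦ (hL d hd).inv_inv)
  have hv : Commute z (c⁻¹ :: L.map (·⁻¹)).alternatingProd :=
    commute_alternatingProd ((forall_mem_map (l := c :: L)).mpr fun d hd ↦ (h d hd).inv_right)
  simp only [solvingWord, map_cons, hinv, alternatingProd_mul_cons hL]
  rw [mul_assoc _ z, ← mul_assoc z, hv.eq, mul_inv_cancel_right, mul_assoc]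

theorem alternatingProd_mul_pow_two_mul_add_one (h : ∀ c ∈ L, SemiconjBy y c c⁻¹) (l : ℕ) :
    (L.alternatingProd * y) ^ (2 * l + 1) = solvingWord l L * y ^ (2 * l + 1) := by
  have hinv : SemiconjBy y (L.map (·⁻¹)).alternatingProd L.alternatingProd := by
    simpa [Function.comp_def] using semiconjBy_alternatingProd (f := (·⁻¹))
      (forall_mem_map.mpr fun c hc ↦ (h c hc).inv_right)
  exact mul_pow_two_mul_add_one (semiconjBy_alternatingProd h) hinv l

end AlternatingProd

section Elimination

open List

variable {G : Type*} [Group G] {s x t f : G} {S : List G} {l : ℕ} {β e : ℤ}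

theorem zpow_eq_of_sq_mul_eq_one (hx : x ^ 2 * f = 1) (k : ℤ) : f ^ k = x ^ (-(2 * k)) := by
  rw [eq_inv_of_mul_eq_one_right hx, inv_zpow', ← zpow_natCast x 2, ← zpow_mul]
  simp

theorem mul_mul_zpow_eq_one_iff (hx : x ^ 2 * f = 1) :
    s * x * t * f ^ e = 1 ↔ t = (s * x)⁻¹ * x ^ (2 * e) := by
  rw [zpow_eq_of_sq_mul_eq_one hx, zpow_neg, mul_inv_eq_one, eq_inv_mul_iff_mul_eq]

theorem inv_eq_alternatingProd_mul_zpow (hS : ∀ a ∈ S, SemiconjBy x (a * x⁻¹) (a * x⁻¹)⁻¹)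
    (hx : x ^ 2 * f = 1) (ht : S.prod * x * t * f ^ e = 1) :
    t⁻¹ = (S.map (· * x⁻¹)).alternatingProd * x ^ (S.length + 1 - 2 * e) := by
  set C := S.map (· * x⁻¹) with hC
  have hinv : ∀ c ∈ C, SemiconjBy x c c⁻¹ := by simpa [hC] using hS
  have hprod : S.prod = C.alternatingProd * x ^ S.length := by
    simpa [hC, Function.comp_def] using prod_map_mul_right hinv
  have hcomm : Commute (x ^ (-(2 * e))) C.alternatingProd := commute_alternatingProd fun c hc ↦
    commute_zpow_of_even (hinv c hc) (even_two_mul e).neg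
  calc t⁻¹ = x ^ (-(2 * e)) * (S.prod * x) := by
        rw [(mul_mul_zpow_eq_one_iff hx).mp ht, mul_inv_rev, inv_inv, zpow_neg]
    _ = C.alternatingProd * x ^ (S.length + 1 - 2 * e) := by
        rw [hprod, mul_assoc, ← mul_assoc, hcomm.eq, mul_assoc, ← pow_succ, ← zpow_natCast,
          ← zpow_add]
        push_cast
        ring_nf

/-- The exponents `rᵢ` in the change of generators `sᵢ = aᵢ xʳⁱ`, for `n + 1` generators `aᵢ`. The
first one is chosen so that the relator `s_{2q}^{2λ+1} f^β` becomes `x = solvingWord λ a`, with no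
further power of `x`. -/
def shearExponent (l n : ℕ) (β e : ℤ) : Fin (n + 1) → ℤ :=
  Fin.cons (-(2 * β + (2 * l + 1) * (n + 2 - 2 * e))) fun _ ↦ 1

theorem solvingWord_eq_iff (hS : ∀ a ∈ s :: S, a ^ 2 * f = 1) (hx : x ^ 2 * f = 1)
    (hodd : Odd S.length) (ht : (s :: S).prod * x * t * f ^ e = 1) :
    solvingWord l (s * x ^ (-shearExponent l S.length β e 0) :: S.map (· * x⁻¹)) = x ↔
      t ^ (2 * l + 1) * f ^ β = 1 := by
  set k : ℤ := S.length + 2 - 2 * e with hk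
  set ρ := shearExponent l S.length β e 0
  have hρk : ρ = -(2 * β + (2 * l + 1) * k) := rfl
  have hkodd : Odd k := by grind
  have hρodd : Odd ρ := by grind
  have hinv : ∀ a ∈ s :: S, SemiconjBy x (a * x⁻¹) (a * x⁻¹)⁻¹ := fun a ha ↦
    semiconjBy_inv_of_sq_eq_sq (mul_right_cancel ((hS a ha).trans hx.symm))
  have hinvMap : ∀ c ∈ (s :: S).map (· * x⁻¹), SemiconjBy x c c⁻¹ := forall_mem_map.mpr hinv
  set W := solvingWord l ((s :: S).map (· * x⁻¹)) with hW
  have hpow : (t ^ (2 * l + 1))⁻¹ = W * x ^ (k * (2 * l + 1)) := by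
    have ht' : t⁻¹ = ((s :: S).map (· * x⁻¹)).alternatingProd * x ^ k := by
      rw [inv_eq_alternatingProd_mul_zpow hinv hx ht, length_cons, hk]
      push_cast
      ring_nf
    rw [← inv_pow, ht', alternatingProd_mul_pow_two_mul_add_one
      (fun c hc ↦ semiconjBy_zpow_of_odd (hinvMap c hc) hkodd), ← zpow_natCast, ← zpow_mul]
    norm_cast
  have hshear : solvingWord l (s * x ^ (-ρ) :: S.map (· * x⁻¹)) = W * x ^ (1 - ρ) := by
    have hs : s * x ^ (-ρ) = s * x⁻¹ * x ^ (1 - ρ) := by group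
    rw [hs, solvingWord_mul_cons, hW, map_cons]
    exact fun c hc ↦ commute_zpow_of_even (hinvMap c hc) (odd_one.sub_odd hρodd)
  calc _ ↔ W * x ^ (1 - ρ) = x := by rw [hshear]
    _ ↔ W = x ^ ρ := by rw [← eq_mul_inv_iff_mul_eq, ← zpow_neg, ← zpow_one_add]; ring_nf
    _ ↔ W * x ^ (k * (2 * l + 1)) = x ^ (-(2 * β)) := by
      rw [← eq_mul_inv_iff_mul_eq, ← zpow_neg, ← zpow_add, hρk]; ring_nf
    _ ↔ _ := by rw [mul_eq_one_iff_inv_eq, hpow, zpow_eq_of_sq_mul_eq_one hx]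

end Elimination

section Presentations

variable {G H : Type*} [Group G] [Group H] {n l : ℕ} {β e : ℤ}

/-- The relations of the Boileau–Zieschang group for a tuple `b = (s₁, …, s_{2q-2}, x, t, f)`, where
`x` and `t` stand for `s_{2q-1}` and `s_{2q}`. -/
structure IsBZTuple (l : ℕ) (β e : ℤ) (b : Fin (n + 3) → G) : Prop where
  sq_mul (i : Fin n) : b i.castSucc.castSucc.castSucc ^ 2 * b (Fin.last (n + 2)) = 1
  last_sq_mul : b (Fin.last n).castSucc.castSucc ^ 2 * b (Fin.last (n + 2)) = 1
  pow_mul_zpow : b (Fin.last (n + 1)).castSucc ^ (2 * l + 1) * b (Fin.last (n + 2)) ^ β = 1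
  prod_mul : (List.ofFn fun i : Fin n ↦ b i.castSucc.castSucc.castSucc).prod *
    b (Fin.last n).castSucc.castSucc * b (Fin.last (n + 1)).castSucc * b (Fin.last (n + 2)) ^ e = 1

/-- The value `((∏ sᵢ) x)⁻¹ x²ᵉ` of `s_{2q}` forced by `s₁ ⋯ s_{2q} f ^ e = 1` and `f = x⁻²`. -/
def lastFactor (e : ℤ) (s : Fin n → G) (x : G) : G :=
  ((List.ofFn s).prod * x)⁻¹ * x ^ (2 * e)

/-- The elements `sᵢ = aᵢ xʳⁱ`, where `x = solvingWord l a`. -/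
def unshear (l : ℕ) (r : Fin n → ℤ) (a : Fin n → G) (i : Fin n) : G :=
  a i * solvingWord l (List.ofFn a) ^ r i

/-- The relators `sᵢ² x⁻²` of the smaller presentation, written in its generators `aᵢ`. -/
def reducedRelator (l : ℕ) (r : Fin n → ℤ) (i : Fin n) : FreeGroup (Fin n) :=
  unshear l r .of i ^ 2 * (solvingWord l (List.ofFn .of) ^ 2)⁻¹

/-- The tuple `(aᵢ)` of generators of the smaller presentation, computed from the tuple
`b = (s, x, t, f)` of all generators. -/
def reduce (r : Fin n → ℤ) (b : Fin (n + 3) → G) (i : Fin n) : G :=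
  b i.castSucc.castSucc.castSucc * b (Fin.last n).castSucc.castSucc ^ (-r i)

/-- The tuple `(s, x, t, f)` of all generators, computed from the tuple `a` of generators of the
smaller presentation. -/
def expand (l : ℕ) (r : Fin n → ℤ) (e : ℤ) (a : Fin n → G) : Fin (n + 3) → G :=
  let x := solvingWord l (List.ofFn a)
  Fin.snoc (α := fun _ ↦ G) (Fin.snoc (α := fun _ ↦ G) (Fin.snoc (α := fun _ ↦ G)
    (unshear l r a) x) (lastFactor e (unshear l r a) x)) (x ^ 2)⁻¹

theorem map_solvingWord_ofFn (φ : G →* H) (a : Fin n → G) :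
    φ (solvingWord l (List.ofFn a)) = solvingWord l (List.ofFn (φ ∘ a)) := by
  rw [map_solvingWord, List.map_ofFn]

theorem comp_unshear (φ : G →* H) (r : Fin n → ℤ) (a : Fin n → G) :
    φ ∘ unshear l r a = unshear l r (φ ∘ a) := by
  ext i
  simp [unshear, map_solvingWord_ofFn]

theorem map_lastFactor (φ : G →* H) (s : Fin n → G) (x : G) :
    φ (lastFactor e s x) = lastFactor e (φ ∘ s) (φ x) := by
  simp [lastFactor, map_list_prod, List.map_ofFn]

theorem comp_expand (φ : G →* H) (r : Fin n → ℤ) (a : Fin n → G) :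
    φ ∘ expand l r e a = expand l r e (φ ∘ a) := by
  simp [expand, Fin.comp_snoc, comp_unshear, map_lastFactor, map_solvingWord_ofFn]

theorem lift_reduce (r : Fin n → ℤ) (b : Fin (n + 3) → G) (i : Fin n) :
    FreeGroup.lift b (reduce r .of i) = reduce r b i := by
  simp [reduce]

theorem lift_expand (r : Fin n → ℤ) (a : Fin n → G) (j : Fin (n + 3)) :
    FreeGroup.lift a (expand l r e .of j) = expand l r e a j := by
  simpa [Function.comp_def] using congrFun (comp_expand (FreeGroup.lift a) r .of) j

theorem isSolution_reducedRelator_iff (r : Fin n → ℤ) (a : Fin n → G) :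
    IsSolution (Set.range (reducedRelator l r)) a ↔
      ∀ i, unshear l r a i ^ 2 = solvingWord l (List.ofFn a) ^ 2 := by
  have lift_unshear (i) : FreeGroup.lift a (unshear l r .of i) = unshear l r a i := by
    simp [unshear, map_solvingWord_ofFn, Function.comp_def]
  simp [IsSolution, reducedRelator, lift_unshear, map_solvingWord_ofFn, Function.comp_def,
    mul_inv_eq_one]

theorem isSolution_BZrels_iff {p : ℕ} (hq : 1 ≤ p + 2) (b : Fin (2 * p + 2 + 3) → G) :
    IsSolution (BZrels (p + 2) hq l β e) b ↔ IsBZTuple (n := 2 * p + 2) l β e b := by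
  have lift_gen (i) : FreeGroup.lift b (BZgen (p + 2) i) = b i.castSucc := FreeGroup.lift_apply_of
  have lift_f : FreeGroup.lift b (BZf (p + 2)) = b (Fin.last (2 * p + 4)) := FreeGroup.lift_apply_of
  have lift_prod : FreeGroup.lift b (List.ofFn (BZgen (p + 2))).prod =
      (List.ofFn fun i : Fin (2 * p + 2) ↦ b i.castSucc.castSucc.castSucc).prod *
        b (Fin.last (2 * p + 2)).castSucc.castSucc * b (Fin.last (2 * p + 3)).castSucc := by
    rw [map_list_prod, List.map_ofFn, ← List.prod_concat, ← List.prod_concat,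
      ← List.ofFn_succ' fun i : Fin (2 * p + 3) ↦ b i.castSucc.castSucc,
      ← List.ofFn_succ' fun i : Fin (2 * p + 4) ↦ b i.castSucc]
    exact congrArg (fun c ↦ (List.ofFn c).prod) (funext lift_gen)
  calc
    _ ↔ (∀ i : Fin (2 * p + 2 + 1), b i.castSucc.castSucc ^ 2 * b (Fin.last (2 * p + 4)) = 1) ∧
        b (Fin.last (2 * p + 3)).castSucc ^ (2 * l + 1) * b (Fin.last (2 * p + 4)) ^ β = 1 ∧
        _ := by
      simp only [IsSolution, BZrels, Set.mem_ofPred_eq, or_imp, forall_and, forall_eq,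
        forall_exists_index, forall_eq_apply_imp_iff, map_mul, map_pow, map_zpow, lift_gen, lift_f,
        lift_prod]
      rfl
    _ ↔ _ := by
      rw [Fin.forall_fin_succ']
      exact ⟨fun ⟨⟨hs, hx⟩, ht, hprod⟩ ↦ ⟨hs, hx, ht, hprod⟩,
        fun ⟨hs, hx, ht, hprod⟩ ↦ ⟨⟨hs, hx⟩, ht, hprod⟩⟩

theorem solvingWord_ofFn_eq_iff {s : Fin (n + 1) → G} {x t f : G} (hn : Odd n)
    (hs : ∀ i, s i ^ 2 * f = 1) (hx : x ^ 2 * f = 1) (ht : (List.ofFn s).prod * x * t * f ^ e = 1) :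
    solvingWord l (List.ofFn fun i ↦ s i * x ^ (-shearExponent l n β e i)) = x ↔
      t ^ (2 * l + 1) * f ^ β = 1 := by
  have hS : ∀ a ∈ s 0 :: List.ofFn (fun i : Fin n ↦ s i.succ), a ^ 2 * f = 1 := by
    rw [← List.ofFn_succ]
    exact List.forall_mem_ofFn_iff.mpr hs
  have hlist : (List.ofFn fun i ↦ s i * x ^ (-shearExponent l n β e i)) =
      s 0 * x ^ (-shearExponent l n β e 0) ::
        (List.ofFn fun i : Fin n ↦ s i.succ).map (· * x⁻¹) := by
    rw [List.ofFn_succ, List.map_ofFn]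
    simp only [shearExponent, Fin.cons_succ, zpow_neg_one, Function.comp_def]
  rw [List.ofFn_succ] at ht
  rw [hlist, ← solvingWord_eq_iff hS hx (by simpa using hn) ht, List.length_ofFn]

theorem IsBZTuple.solvingWord_reduce (hn : Odd n) {b : Fin (n + 1 + 3) → G}
    (h : IsBZTuple l β e b) :
    solvingWord l (List.ofFn (reduce (shearExponent l n β e) b)) =
      b (Fin.last (n + 1)).castSucc.castSucc :=
  (solvingWord_ofFn_eq_iff hn h.sq_mul h.last_sq_mul h.prod_mul).mpr h.pow_mul_zpow

theorem unshear_reduce {r : Fin n → ℤ} {b : Fin (n + 3) → G}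
    (hb : solvingWord l (List.ofFn (reduce r b)) = b (Fin.last n).castSucc.castSucc) (i : Fin n) :
    unshear l r (reduce r b) i = b i.castSucc.castSucc.castSucc := by
  simp [unshear, hb, reduce]

theorem IsBZTuple.expand_reduce (hn : Odd n) {b : Fin (n + 1 + 3) → G} (h : IsBZTuple l β e b) :
    expand l (shearExponent l n β e) e (reduce (shearExponent l n β e) b) = b := by
  have hW := h.solvingWord_reduce hn
  have hs := funext (unshear_reduce hW)
  have ht := (mul_mul_zpow_eq_one_iff h.last_sq_mul).mp h.prod_mul
  have hf := eq_inv_of_mul_eq_one_right h.last_sq_mul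
  rw [expand, hW, hs, lastFactor, ← ht, ← hf]
  have snoc_init {m} (c : Fin (m + 1) → G) :
      Fin.snoc (α := fun _ ↦ G) (fun i ↦ c i.castSucc) (c (Fin.last m)) = c :=
    Fin.snoc_init_self c
  rw [snoc_init fun i ↦ b i.castSucc.castSucc, snoc_init fun i ↦ b i.castSucc, snoc_init]

theorem reduce_expand (r : Fin n → ℤ) (a : Fin n → G) : reduce r (expand l r e a) = a := by
  ext i
  simp [reduce, expand, unshear]

theorem isBZTuple_expand (hn : Odd n) {a : Fin (n + 1) → G}
    (h : ∀ i, unshear l (shearExponent l n β e) a i ^ 2 = solvingWord l (List.ofFn a) ^ 2) :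
    IsBZTuple l β e (expand l (shearExponent l n β e) e a) := by
  set r := shearExponent l n β e
  set x := solvingWord l (List.ofFn a) with hx
  have hs : ∀ i, unshear l r a i ^ 2 * (x ^ 2)⁻¹ = 1 := fun i ↦ mul_inv_eq_one.mpr (h i)
  have hf : x ^ 2 * (x ^ 2)⁻¹ = 1 := mul_inv_cancel _
  have ht : (List.ofFn (unshear l r a)).prod * x * lastFactor e (unshear l r a) x *
      (x ^ 2)⁻¹ ^ e = 1 := (mul_mul_zpow_eq_one_iff hf).mpr rfl
  have ha : (fun i ↦ unshear l r a i * x ^ (-r i)) = a := by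
    ext i
    simp [unshear, hx]
  have hpow : lastFactor e (unshear l r a) x ^ (2 * l + 1) * (x ^ 2)⁻¹ ^ β = 1 :=
    (solvingWord_ofFn_eq_iff hn hs hf ht).mp (by rw [ha])
  refine ⟨?_, ?_, ?_, ?_⟩ <;> simpa only [expand, Fin.snoc_castSucc, Fin.snoc_last]

/-- The Boileau–Zieschang group has a presentation in which `s_{2q-1}`, `s_{2q}` and `f` have been
eliminated. -/
def reducedPresentationEquiv (p : ℕ) (hq : 1 ≤ p + 2) (l : ℕ) (β e : ℤ) :
    PresentedGroup (Set.range (reducedRelator l (shearExponent l (2 * p + 1) β e))) ≃*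
      PresentedGroup (BZrels (p + 2) hq l β e) :=
  have hn : Odd (2 * p + 1) := odd_two_mul_add_one p
  equivOfSubstitution (reduce (shearExponent l (2 * p + 1) β e) .of)
    (expand l (shearExponent l (2 * p + 1) β e) e .of)
    (fun b hb ↦ by
      have h := (isSolution_BZrels_iff hq b).mp hb
      simp only [lift_reduce, lift_expand]
      refine ⟨(isSolution_reducedRelator_iff _ _).mpr fun i ↦ ?_, congrFun (h.expand_reduce hn)⟩
      have hW := h.solvingWord_reduce hn
      rw [hW, unshear_reduce hW, mul_right_cancel ((h.sq_mul i).trans h.last_sq_mul.symm)])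
    (fun a ha ↦ by
      have h := (isSolution_reducedRelator_iff _ a).mp ha
      simp only [lift_reduce, lift_expand]
      exact ⟨(isSolution_BZrels_iff hq _).mpr (isBZTuple_expand hn h),
        congrFun (reduce_expand _ a)⟩)

end Presentations

end BoileauZieschang

/-- Proposition 1.5 of Boileau--Zieschang: the group
`⟨s₁, …, s_{2q}, f ∣ s₁² f, …, s_{2q−1}² f, s_{2q}^{2λ+1} f^β, s₁ ⋯ s_{2q} f^e⟩`
with `q ≥ 2`, `λ ≥ 1`, admits a presentation with `2q−2` generators and at most
`2q−2` defining relators. -/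
theorem BZ_presentation (q : ℕ) (hq : 2 ≤ q) (lam : ℕ) (hlam : 1 ≤ lam) (β e : ℤ) :
    ∃ R : Finset (FreeGroup (Fin (2 * q - 2))), R.card ≤ 2 * q - 2 ∧
      Nonempty (PresentedGroup (R : Set (FreeGroup (Fin (2 * q - 2)))) ≃*
        PresentedGroup (BZrels q (by omega) lam β e)) := by
  obtain ⟨p, rfl⟩ := Nat.exists_eq_add_of_le' hq
  let relator := BoileauZieschang.reducedRelator lam
    (BoileauZieschang.shearExponent lam (2 * p + 1) β e)
  refine ⟨Finset.univ.image relator, Finset.card_image_le.trans_eq (Finset.card_fin _), ⟨?_⟩⟩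
  rw [Finset.coe_image, Finset.coe_univ, Set.image_univ]
  exact BoileauZieschang.reducedPresentationEquiv p (by omega) lam β e
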